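/- Let s ≥ 0 be an even integer, set γ = |π|^{1/(q^{s+1}+q^s)}, and let u_0 ∈ ℂ_p with |u_0| = γ. Then φ_1(u) ≠ 0 for every u with |u − u_0| < (|π|·γ^{-2})^{1/(q-1)}, and the map u ↦ φ_0(u)/φ_1(u) is a bijection from the open disk {u ∈ ℂ_p : |u − u_0| < (|π|·γ^{-2})^{1/(q-1)}} onto the open disk {z ∈ ℂ_p : |z − φ_0(u_0)/φ_1(u_0)| < |π|^{s − 1/(q+1)}}. -/

import Mathlib

open Filter


/-- The coefficients `m_k(u)` of the quasi-logarithm of the Gross-Hopkins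
universal deformation: `m_0 = 1`, `m_1(u) = u/π`, and
`m_k(u) = (u/π)·m_{k-1}(u^q) + (1/π)·m_{k-2}(u^{q²})`. -/
noncomputable def ghm {C : Type*} [Field C] (π : C) (q : ℕ) : ℕ → C → C
  | 0, _ => 1
  | 1, u => u / π
  | (k+2), u => (u / π) * ghm π q (k+1) (u ^ q) + (1 / π) * ghm π q k (u ^ (q^2))

/-- First coordinate of the Gross-Hopkins period map:
`φ₀(u) = lim_k π^k · m_{2k}(u)`. -/
noncomputable def ghphi0 {C : Type*} [NormedField C] (π : C) (q : ℕ) (u : C) : C :=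
  limUnder atTop (fun k => π ^ k * ghm π q (2*k) u)

/-- Second coordinate of the Gross-Hopkins period map:
`φ₁(u) = lim_{k≥1} π^k · m_{2k-1}(u)`. -/
noncomputable def ghphi1 {C : Type*} [NormedField C] (π : C) (q : ℕ) (u : C) : C :=
  limUnder atTop (fun k => π ^ (k+1) * ghm π q (2*k+1) u)

/-!
Unwinding the recursion for `m_k` from its other end, `π m_{k+2} = u ^ q ^ (k + 1) m_{k+1} + m_k`,
makes the determinants of consecutive coefficients at two points `u, v` telescope. In the limit,
`φ₁(u)φ₀(v) - φ₀(u)φ₁(v)` is `u - v` up to a relative error controlled by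
`|u ^ q ^ k - v ^ q ^ k|`. On the circle `|u| = γ` the leading monomial of `m_{s+1}` dominates
`φ₁` (for `s` even, `m_{s+1}` is one of the terms of the sequence defining `φ₁`), so `φ₁` varies
there with small relative error. Hence `φ₀ / φ₁` is a strict perturbation of
the dilation by `-1 / φ₁(u₀) ^ 2`; by Banach's fixed point theorem such a perturbation maps open
disks bijectively onto open disks, just as the dilation does.
-/

section Ultrametric

open Metric NNReal

section Group

variable {E : Type*} [NormedAddCommGroup E] [IsUltrametricDist E]

lemma norm_sub_le_max_norm (x y : E) : ‖x - y‖ ≤ max ‖x‖ ‖y‖ := by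
  simpa only [sub_eq_add_neg, norm_neg] using IsUltrametricDist.norm_add_le_max x (-y)

lemma norm_eq_of_norm_sub_lt_right {x y : E} (h : ‖x - y‖ < ‖y‖) : ‖x‖ = ‖y‖ := by
  rw [← norm_neg y]
  refine IsUltrametricDist.norm_eq_of_add_norm_lt_max ?_
  rw [← sub_eq_add_neg, norm_neg]
  exact h.trans_le (le_max_right _ _)

lemma norm_sub_le_of_forall_norm_succ_sub_le {x : ℕ → E} {m n : ℕ} (hmn : m ≤ n) {B : ℝ}
    (hB : 0 ≤ B) (h : ∀ k, m ≤ k → k < n → ‖x (k + 1) - x k‖ ≤ B) : ‖x n - x m‖ ≤ B := by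
  rw [← Finset.sum_Ico_sub x hmn]
  refine IsUltrametricDist.norm_sum_le_of_forall_le_of_nonneg hB fun k hk => ?_
  exact h k (Finset.mem_Ico.1 hk).1 (Finset.mem_Ico.1 hk).2

variable {f : E → E} {s : Set E} {x₀ : E} {θ : ℝ≥0}

lemma dist_map_eq_of_lipschitzOnWith_sub_self (hθ : θ < 1)
    (hf : LipschitzOnWith θ (fun x => f x - x) s) {x y : E} (hx : x ∈ s) (hy : y ∈ s) :
    dist (f x) (f y) = dist x y := by
  rcases eq_or_ne x y with rfl | hxy
  · rw [dist_self, dist_self]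
  rw [dist_eq_norm, dist_eq_norm]
  refine norm_eq_of_norm_sub_lt_right ?_
  calc ‖f x - f y - (x - y)‖ = ‖f x - x - (f y - y)‖ := by congr 1; abel
    _ ≤ θ * ‖x - y‖ := hf.norm_sub_le hx hy
    _ < ‖x - y‖ := mul_lt_of_lt_one_left (norm_sub_pos_iff.2 hxy) (by exact_mod_cast hθ)

/-- A zero of `f - z` is a fixed point of the contraction `x ↦ z - (f x - x)`. -/
lemma surjOn_closedBall_of_lipschitzOnWith_sub_self [CompleteSpace E] {ρ : ℝ} (hρ : 0 ≤ ρ)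
    (hθ : θ < 1) (hf : LipschitzOnWith θ (fun x => f x - x) (closedBall x₀ ρ)) :
    Set.SurjOn f (closedBall x₀ ρ) (closedBall (f x₀) ρ) := by
  intro z hz
  have hx₀ : x₀ ∈ closedBall x₀ ρ := mem_closedBall_self hρ
  let T : E → E := fun x => z - (f x - x)
  have hT : LipschitzOnWith θ T (closedBall x₀ ρ) :=
    LipschitzOnWith.of_dist_le_mul fun x hx y hy =>
      (dist_sub_left z _ _).trans_le (hf.dist_le_mul x hx y hy)
  have hmaps : Set.MapsTo T (closedBall x₀ ρ) (closedBall x₀ ρ) := by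
    intro x hx
    refine (dist_triangle_max _ (T x₀) _).trans (max_le ?_ ?_)
    · calc dist (T x) (T x₀) ≤ θ * dist x x₀ := hT.dist_le_mul x hx x₀ hx₀
        _ ≤ dist x x₀ := mul_le_of_le_one_left dist_nonneg (by exact_mod_cast hθ.le)
        _ ≤ ρ := hx
    · calc dist (T x₀) x₀ = ‖z - f x₀‖ := by rw [dist_eq_norm]; congr 1; simp only [T]; abel
        _ ≤ ρ := mem_closedBall_iff_norm.1 hz
  obtain ⟨y, hy, hfix, -⟩ := ContractingWith.exists_fixedPoint' isClosed_closedBall.isComplete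
    hmaps ⟨hθ, hT.mapsToRestrict hmaps⟩ hx₀ (edist_ne_top _ _)
  refine ⟨y, hy, ?_⟩
  have hzy : z - (f y - y) = y := hfix
  rw [sub_eq_iff_eq_add, add_sub_cancel] at hzy
  exact hzy.symm

lemma bijOn_ball_of_forall_lipschitzOnWith_sub_self [CompleteSpace E] {R : ℝ}
    (hf : ∀ ρ, 0 ≤ ρ → ρ < R →
      ∃ θ : ℝ≥0, θ < 1 ∧ LipschitzOnWith θ (fun x => f x - x) (closedBall x₀ ρ)) :
    Set.BijOn f (ball x₀ R) (ball (f x₀) R) := by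
  have hdist {x y : E} (hx : x ∈ ball x₀ R) (hy : y ∈ ball x₀ R) :
      dist (f x) (f y) = dist x y := by
    obtain ⟨θ, hθ, hfθ⟩ := hf (max (dist x x₀) (dist y x₀)) (le_max_of_le_left dist_nonneg)
      (max_lt hx hy)
    exact dist_map_eq_of_lipschitzOnWith_sub_self hθ hfθ (mem_closedBall.2 (le_max_left _ _))
      (mem_closedBall.2 (le_max_right _ _))
  refine ⟨fun x hx => ?_, fun x hx y hy hxy => ?_, fun z hz => ?_⟩
  · exact (hdist hx (mem_ball_self (dist_nonneg.trans_lt hx))).trans_lt hx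
  · exact dist_eq_zero.1 ((hdist hx hy).symm.trans (dist_eq_zero.2 hxy))
  · obtain ⟨θ, hθ, hfθ⟩ := hf (dist z (f x₀)) dist_nonneg hz
    exact (surjOn_closedBall_of_lipschitzOnWith_sub_self dist_nonneg hθ hfθ).mono
      (closedBall_subset_ball hz) subset_rfl (mem_closedBall.2 le_rfl)

end Group

section Field

variable {C : Type*} [NormedField C] [IsUltrametricDist C]

lemma bijOn_ball_of_forall_lipschitzOnWith_inv_mul_sub [CompleteSpace C] {f : C → C} {c u₀ : C}
    (hc : c ≠ 0) {R : ℝ}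
    (hf : ∀ ρ, 0 ≤ ρ → ρ < R →
      ∃ θ : ℝ≥0, θ < 1 ∧ LipschitzOnWith θ (fun u => c⁻¹ * f u - u) (closedBall u₀ ρ)) :
    Set.BijOn f (ball u₀ R) (ball (f u₀) (‖c‖ * R)) := by
  have hscale : Set.BijOn (c * ·) (ball (c⁻¹ * f u₀) R) (ball (f u₀) (‖c‖ * R)) := by
    have himage : (c * ·) '' ball (c⁻¹ * f u₀) R = ball (f u₀) (‖c‖ * R) := by
      have h := smul_ball hc (c⁻¹ * f u₀) R
      rwa [smul_eq_mul, mul_inv_cancel_left₀ hc] at h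
    exact himage ▸ (mul_right_injective₀ hc).injOn.bijOn_image
  refine (hscale.comp (bijOn_ball_of_forall_lipschitzOnWith_sub_self
    (f := fun u => c⁻¹ * f u) hf)).congr fun u _ => ?_
  exact mul_inv_cancel_left₀ hc (f u)

variable {x y : C} {θ : ℝ}

lemma norm_mul_sub_one_le (hθ : θ ≤ 1) (hx : ‖x - 1‖ ≤ θ) (hy : ‖y - 1‖ ≤ θ) :
    ‖x * y - 1‖ ≤ θ := by
  have hsplit : x * y - 1 = (x - 1) * (y - 1) + (x - 1) + (y - 1) := by ring
  rw [hsplit]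
  refine (IsUltrametricDist.norm_add_le_max _ _).trans (max_le ?_ hy)
  refine (IsUltrametricDist.norm_add_le_max _ _).trans (max_le ?_ hx)
  rw [norm_mul]
  exact (mul_le_of_le_one_right (norm_nonneg _) (hy.trans hθ)).trans hx

lemma norm_pow_sub_one_le (hθ : θ ≤ 1) (hx : ‖x - 1‖ ≤ θ) (n : ℕ) : ‖x ^ n - 1‖ ≤ θ := by
  induction n with
  | zero => simpa using (norm_nonneg _).trans hx
  | succ n ih => exact pow_succ x n ▸ norm_mul_sub_one_le hθ ih hx

lemma norm_eq_one_of_norm_sub_one_lt (hx : ‖x - 1‖ < 1) : ‖x‖ = 1 := by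
  rw [← norm_one (α := C)] at hx ⊢
  exact norm_eq_of_norm_sub_lt_right hx

lemma norm_eq_norm_of_norm_div_sub_one_lt (hxy : ‖x / y - 1‖ < 1) : ‖x‖ = ‖y‖ := by
  have h := norm_eq_one_of_norm_sub_one_lt hxy
  rw [norm_div] at h
  exact eq_of_div_eq_one h

lemma norm_inv_sub_one_le (hθ : θ < 1) (hx : ‖x - 1‖ ≤ θ) : ‖x⁻¹ - 1‖ ≤ θ := by
  have hx1 := norm_eq_one_of_norm_sub_one_lt (hx.trans_lt hθ)
  have hx0 : x ≠ 0 := norm_pos_iff.1 (hx1 ▸ one_pos)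
  have hsplit : x⁻¹ - 1 = -(x⁻¹ * (x - 1)) := by field_simp; ring
  rwa [hsplit, norm_neg, norm_mul, norm_inv, hx1, inv_one, one_mul]

lemma norm_pow_prime_pow_sub_le {p : ℕ} (hp : p.Prime) (r : ℕ) (hx : ‖x‖ ≤ 1) (hy : ‖y‖ ≤ 1) :
    ‖x ^ p ^ r - y ^ p ^ r‖ ≤ max ‖(p : C)‖ (‖x - y‖ ^ (p ^ r - 1)) * ‖x - y‖ := by
  have hxy : ‖x - y‖ ≤ 1 := (norm_sub_le_max_norm x y).trans (max_le hx hy)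
  have hexpand := add_pow_prime_pow_eq hp (x - y) y r
  rw [sub_add_cancel] at hexpand
  set S := ∑ k ∈ Finset.Ioo 0 (p ^ r), (x - y) ^ (k - 1) * y ^ (p ^ r - k - 1) *
    (((p ^ r).choose k / p : ℕ) : C)
  have hS : ‖S‖ ≤ 1 := by
    refine IsUltrametricDist.norm_sum_le_of_forall_le_of_nonneg zero_le_one fun k _ => ?_
    rw [norm_mul, norm_mul, norm_pow, norm_pow]
    exact mul_le_one₀ (mul_le_one₀ (pow_le_one₀ (norm_nonneg _) hxy) (by positivity)
      (pow_le_one₀ (norm_nonneg _) hy)) (norm_nonneg _) (IsUltrametricDist.norm_natCast_le_one C _)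
  have hsplit : x ^ p ^ r - y ^ p ^ r = p * (x - y) * (y * S) + (x - y) ^ p ^ r := by
    rw [hexpand]; ring
  rw [hsplit, max_mul_of_nonneg _ _ (norm_nonneg _), pow_sub_one_mul (pow_pos hp.pos r).ne']
  refine (IsUltrametricDist.norm_add_le_max _ _).trans (max_le_max ?_ (norm_pow _ _).le)
  rw [norm_mul, norm_mul, norm_mul]
  exact mul_le_of_le_one_right (by positivity) (mul_le_one₀ hy (norm_nonneg _) hS)

lemma norm_pow_pow_sub_le {p r q : ℕ} (hp : p.Prime) (hq : q = p ^ r) (hx : ‖x‖ ≤ 1)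
    (hy : ‖y‖ ≤ 1) (i : ℕ) :
    ‖x ^ q ^ i - y ^ q ^ i‖ ≤ max ‖(p : C)‖ (‖x - y‖ ^ (q - 1)) ^ i * ‖x - y‖ := by
  set κ := max ‖(p : C)‖ (‖x - y‖ ^ (q - 1))
  have hxy : ‖x - y‖ ≤ 1 := (norm_sub_le_max_norm x y).trans (max_le hx hy)
  have hκ0 : 0 ≤ κ := le_max_of_le_left (norm_nonneg _)
  have hκ1 : κ ≤ 1 :=
    max_le (IsUltrametricDist.norm_natCast_le_one C p) (pow_le_one₀ (norm_nonneg _) hxy)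
  induction i with
  | zero => simp
  | succ i ih =>
    have hcontract : ‖x ^ q ^ i - y ^ q ^ i‖ ≤ ‖x - y‖ :=
      ih.trans (mul_le_of_le_one_left (norm_nonneg _) (pow_le_one₀ hκ0 hκ1))
    have hstep := norm_pow_prime_pow_sub_le hp r (x := x ^ q ^ i) (y := y ^ q ^ i)
      (norm_pow x _ ▸ pow_le_one₀ (norm_nonneg _) hx)
      (norm_pow y _ ▸ pow_le_one₀ (norm_nonneg _) hy)
    rw [← hq, ← pow_mul, ← pow_mul, ← pow_succ] at hstep
    calc ‖x ^ q ^ (i + 1) - y ^ q ^ (i + 1)‖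
        ≤ max ‖(p : C)‖ (‖x ^ q ^ i - y ^ q ^ i‖ ^ (q - 1)) * ‖x ^ q ^ i - y ^ q ^ i‖ := hstep
      _ ≤ κ * (κ ^ i * ‖x - y‖) := by
        refine mul_le_mul (max_le_max_left _ ?_) ih (norm_nonneg _) hκ0
        exact pow_le_pow_left₀ (norm_nonneg _) hcontract _
      _ = κ ^ (i + 1) * ‖x - y‖ := by ring

end Field

end Ultrametric

section Recursion

variable {C : Type*} [Field C] {π : C} {q : ℕ}

/-- The recursion defining `ghm`, read from the other end: no substitution `u ↦ u ^ q` is left. -/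
lemma ghm_add_two (π : C) (q k : ℕ) (u : C) :
    ghm π q (k + 2) u = (ghm π q (k + 1) u * u ^ q ^ (k + 1) + ghm π q k u) / π := by
  induction k using Nat.twoStepInduction generalizing u with
  | zero => simp only [ghm]; ring
  | one => simp only [ghm]; ring
  | more k ih1 ih2 =>
    have hdef (i : ℕ) : ghm π q (i + 2) u =
      (u / π) * ghm π q (i + 1) (u ^ q) + (1 / π) * ghm π q i (u ^ q ^ 2) := rfl
    rw [hdef (k + 2), ih2, hdef (k + 1), hdef k]
    simp only [← pow_mul, ← pow_succ']
    rw [ih1 (u ^ q), ih1 (u ^ q ^ 2)]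
    simp only [← pow_mul, ← pow_succ', ← pow_add]
    ring

lemma ghm_even_succ_sub (hπ : π ≠ 0) (u : C) (k : ℕ) :
    π ^ (k + 1) * ghm π q (2 * (k + 1)) u - π ^ k * ghm π q (2 * k) u =
      π ^ k * ghm π q (2 * k + 1) u * u ^ q ^ (2 * k + 1) := by
  rw [show 2 * (k + 1) = 2 * k + 2 by ring, ghm_add_two]
  field_simp
  ring

lemma ghm_odd_succ_sub (hπ : π ≠ 0) (u : C) (k : ℕ) :
    π ^ (k + 1 + 1) * ghm π q (2 * (k + 1) + 1) u - π ^ (k + 1) * ghm π q (2 * k + 1) u =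
      π ^ (k + 1) * ghm π q (2 * (k + 1)) u * u ^ q ^ (2 * (k + 1)) := by
  rw [show 2 * (k + 1) + 1 = (2 * k + 1) + 2 by ring, ghm_add_two,
    show 2 * k + 1 + 1 = 2 * (k + 1) by ring]
  field_simp
  ring

/-- The determinant of the consecutive coefficients `m_k, m_{k+1}` at the points `u, v`, normalised
so as to converge to `φ₁(u)φ₀(v) - φ₀(u)φ₁(v)`. -/
noncomputable def ghmDet (π : C) (q k : ℕ) (u v : C) : C :=
  (-1) ^ k * π ^ (k + 1) * (ghm π q (k + 1) u * ghm π q k v - ghm π q k u * ghm π q (k + 1) v)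

lemma ghmDet_zero (hπ : π ≠ 0) (u v : C) : ghmDet π q 0 u v = u - v := by
  simp only [ghmDet, ghm]
  field_simp
  ring

lemma ghmDet_succ_sub (hπ : π ≠ 0) (u v : C) (k : ℕ) :
    ghmDet π q (k + 1) u v - ghmDet π q k u v =
      (-1) ^ (k + 1) * (π ^ (k + 1) * (ghm π q (k + 1) u * ghm π q (k + 1) v) *
        (u ^ q ^ (k + 1) - v ^ q ^ (k + 1))) := by
  simp only [ghmDet, ghm_add_two]
  field_simp
  ring

/-- The leading monomial of the polynomial `m_i`. -/
def ghmLead (π : C) (q i : ℕ) (u : C) : C :=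
  u ^ (∑ k ∈ Finset.range i, q ^ k) / π ^ i

lemma ghmLead_succ (i : ℕ) (u : C) :
    ghmLead π q (i + 1) u = ghmLead π q i u * u ^ q ^ i / π := by
  rw [ghmLead, ghmLead, Finset.sum_range_succ, pow_add, pow_succ]
  field_simp

lemma ghmLead_ne_zero (hπ : π ≠ 0) {u : C} (hu : u ≠ 0) (i : ℕ) : ghmLead π q i u ≠ 0 :=
  div_ne_zero (pow_ne_zero _ hu) (pow_ne_zero _ hπ)

lemma ghmLead_div_ghmLead (hπ : π ≠ 0) (i : ℕ) (u v : C) :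
    ghmLead π q i u / ghmLead π q i v = (u / v) ^ (∑ k ∈ Finset.range i, q ^ k) := by
  rw [ghmLead, ghmLead, div_div_div_cancel_right₀ (pow_ne_zero _ hπ), div_pow]

lemma ghm_div_ghmLead_succ_sub (hπ : π ≠ 0) {u : C} (hu : u ≠ 0) (i : ℕ) :
    ghm π q (i + 2) u / ghmLead π q (i + 2) u - ghm π q (i + 1) u / ghmLead π q (i + 1) u =
      ghm π q i u / ghmLead π q i u * (π / u ^ (q ^ i + q ^ (i + 1))) := by
  have hlead := ghmLead_ne_zero (q := q) hπ hu i
  rw [ghm_add_two, ghmLead_succ (i + 1), ghmLead_succ i, pow_add]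
  field_simp
  ring

end Recursion

section NormBound

/-- A bound for `|π|ⁱ |m_i(u)|²` on the disk `|u| ≤ r`, where `a = |π|`. The square makes room for
the recursion `m_{i+2} = (u ^ q ^ (i + 1) m_{i+1} + m_i) / π`, which divides by `π` at each single
step as well as at each double step. -/
noncomputable def ghmBound (a r : ℝ) (q i : ℕ) : ℝ :=
  ∏ k ∈ Finset.range i, max 1 (r ^ (2 * q ^ k) / a)

variable {a r : ℝ} {q : ℕ}

lemma ghmBound_succ (i : ℕ) :
    ghmBound a r q (i + 1) = ghmBound a r q i * max 1 (r ^ (2 * q ^ i) / a) :=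
  Finset.prod_range_succ _ _

lemma ghmBound_pos (i : ℕ) : 0 < ghmBound a r q i :=
  Finset.prod_pos fun _ _ => lt_max_of_lt_left one_pos

lemma ghmBound_monotone : Monotone (ghmBound a r q) :=
  monotone_nat_of_le_succ fun i => by
    rw [ghmBound_succ]
    exact le_mul_of_one_le_right (ghmBound_pos i).le (le_max_left _ _)

lemma ghmBound_mul_le_succ (i : ℕ) :
    ghmBound a r q i * (r ^ (2 * q ^ i) / a) ≤ ghmBound a r q (i + 1) := by
  rw [ghmBound_succ]
  exact mul_le_mul_of_nonneg_left (le_max_right _ _) (ghmBound_pos i).le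

lemma ghmBound_le_of_forall_pow_le (ha : 0 < a) {n : ℕ} (h : ∀ k, n ≤ k → r ^ (2 * q ^ k) ≤ a)
    (i : ℕ) : ghmBound a r q i ≤ ghmBound a r q n := by
  rcases le_total i n with hin | hni
  · exact ghmBound_monotone hin
  · induction i, hni using Nat.le_induction with
    | base => exact le_rfl
    | succ i hni ih => rwa [ghmBound_succ, max_eq_left ((div_le_one ha).2 (h i hni)), mul_one]

lemma ghmBound_succ_mul_pow_le (ha : 0 < a) (hr0 : 0 ≤ r) (hr1 : r ≤ 1) (hq : q ≠ 0) {κ : ℝ}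
    (hκ0 : 0 ≤ κ) (hκ : κ * max 1 (r ^ 2 / a) ≤ 1) (i : ℕ) :
    ghmBound a r q (i + 1) * κ ^ (i + 1) ≤ κ * max 1 (r ^ 2 / a) := by
  induction i with
  | zero => simp [ghmBound, mul_comm]
  | succ i ih =>
    have hfactor : κ * max 1 (r ^ (2 * q ^ (i + 1)) / a) ≤ 1 := by
      refine le_trans ?_ hκ
      gcongr ?_ * max _ (?_ / _)
      exact pow_le_pow_of_le_one hr0 hr1 (Nat.le_mul_of_pos_right _ (pow_pos hq.bot_lt _))
    calc ghmBound a r q (i + 1 + 1) * κ ^ (i + 1 + 1)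
        = ghmBound a r q (i + 1) * κ ^ (i + 1) * (κ * max 1 (r ^ (2 * q ^ (i + 1)) / a)) := by
          rw [ghmBound_succ]; ring
      _ ≤ ghmBound a r q (i + 1) * κ ^ (i + 1) :=
          mul_le_of_le_one_right (mul_nonneg (ghmBound_pos _).le (pow_nonneg hκ0 _)) hfactor
      _ ≤ κ * max 1 (r ^ 2 / a) := ih

variable {C : Type*} [NormedField C] {π : C}

lemma ghmBound_eq_norm_ghmLead_sq {u : C} (hπ : 0 < ‖π‖) {i : ℕ}
    (h : ∀ k < i, ‖π‖ ≤ ‖u‖ ^ (2 * q ^ k)) :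
    ghmBound ‖π‖ ‖u‖ q i = ‖π‖ ^ i * ‖ghmLead π q i u‖ ^ 2 := by
  induction i with
  | zero => simp [ghmBound, ghmLead]
  | succ i ih =>
    rw [ghmBound_succ, ih fun k hk => h k (hk.trans i.lt_succ_self),
      max_eq_right ((one_le_div hπ).2 (h i i.lt_succ_self)), ghmLead_succ, norm_div, norm_mul,
      norm_pow]
    field_simp
    ring

variable [IsUltrametricDist C]

lemma norm_sq_ghm_le (hπ : 0 < ‖π‖) {u : C} (hu : ‖u‖ ≤ r) (i : ℕ) :
    ‖π‖ ^ i * ‖ghm π q i u‖ ^ 2 ≤ ghmBound ‖π‖ r q i := by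
  have hstep {i : ℕ} {x : ℝ} (hx : ‖π‖ ^ i * x ^ 2 ≤ ghmBound ‖π‖ r q i) :
      ‖π‖ ^ (i + 1) * (x * ‖u‖ ^ q ^ i / ‖π‖) ^ 2 ≤ ghmBound ‖π‖ r q (i + 1) := by
    calc ‖π‖ ^ (i + 1) * (x * ‖u‖ ^ q ^ i / ‖π‖) ^ 2
        = ‖π‖ ^ i * x ^ 2 * (‖u‖ ^ (2 * q ^ i) / ‖π‖) := by field_simp; ring
      _ ≤ ghmBound ‖π‖ r q i * (r ^ (2 * q ^ i) / ‖π‖) := by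
          have := ghmBound_pos (a := ‖π‖) (r := r) (q := q) i
          gcongr
      _ ≤ ghmBound ‖π‖ r q (i + 1) := ghmBound_mul_le_succ i
  induction i using Nat.twoStepInduction with
  | zero => simp [ghm, ghmBound]
  | one => simpa [ghm] using hstep (i := 0) (x := 1) (by simp [ghmBound])
  | more i ih1 ih2 =>
    have hmax : ‖ghm π q (i + 2) u‖ ≤
        max (‖ghm π q (i + 1) u‖ * ‖u‖ ^ q ^ (i + 1) / ‖π‖) (‖ghm π q i u‖ / ‖π‖) := by
      rw [ghm_add_two, add_div, ← norm_pow, ← norm_mul, ← norm_div, ← norm_div]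
      exact IsUltrametricDist.norm_add_le_max _ _
    rcases le_max_iff.1 hmax with hle | hle
    · exact le_trans (by gcongr) (hstep ih2)
    · calc ‖π‖ ^ (i + 2) * ‖ghm π q (i + 2) u‖ ^ 2
          ≤ ‖π‖ ^ (i + 2) * (‖ghm π q i u‖ / ‖π‖) ^ 2 := by gcongr
        _ = ‖π‖ ^ i * ‖ghm π q i u‖ ^ 2 := by field_simp; ring
        _ ≤ ghmBound ‖π‖ r q i := ih1
        _ ≤ ghmBound ‖π‖ r q (i + 2) := ghmBound_monotone (Nat.le_add_right i 2)

lemma norm_ghm_mul_ghm_le (hπ : 0 < ‖π‖) {u v : C} (hu : ‖u‖ ≤ r) (hv : ‖v‖ ≤ r) (i : ℕ) :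
    ‖π ^ i * (ghm π q i u * ghm π q i v)‖ ≤ ghmBound ‖π‖ r q i := by
  have hu' := norm_sq_ghm_le (q := q) hπ hu i
  have hv' := norm_sq_ghm_le (q := q) hπ hv i
  have hamgm := mul_le_mul_of_nonneg_left
    (two_mul_le_add_sq ‖ghm π q i u‖ ‖ghm π q i v‖) (pow_nonneg hπ.le i)
  rw [norm_mul, norm_mul, norm_pow]
  linarith

lemma norm_sq_pow_mul_ghm_even_le (hπ : 0 < ‖π‖) {u : C} (hu : ‖u‖ ≤ r) (k : ℕ) :
    ‖π ^ k * ghm π q (2 * k) u‖ ^ 2 ≤ ghmBound ‖π‖ r q (2 * k) := by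
  refine le_of_eq_of_le ?_ (norm_sq_ghm_le hπ hu (2 * k))
  rw [norm_mul, norm_pow]
  ring

lemma norm_sq_pow_mul_ghm_odd_le (hπ : 0 < ‖π‖) {u : C} (hu : ‖u‖ ≤ r) (k : ℕ) :
    ‖π ^ k * ghm π q (2 * k + 1) u‖ ^ 2 ≤ ghmBound ‖π‖ r q (2 * k + 1) / ‖π‖ := by
  rw [le_div_iff₀ hπ]
  refine le_of_eq_of_le ?_ (norm_sq_ghm_le hπ hu (2 * k + 1))
  rw [norm_mul, norm_pow]
  ring

end NormBound

section PeriodMap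

lemma cauchySeq_of_norm_succ_sub_le {E : Type*} [SeminormedAddCommGroup E] {q : ℕ} {x : ℕ → E}
    {B r : ℝ} (hB : 0 ≤ B) (hr0 : 0 ≤ r) (hr1 : r < 1) (hq : 1 < q) {e : ℕ → ℕ} (he : ∀ k, k ≤ e k)
    (h : ∀ k, ‖x (k + 1) - x k‖ ≤ B * r ^ q ^ e k) : CauchySeq x := by
  refine cauchySeq_of_le_geometric r B hr1 fun k => ?_
  rw [dist_comm, dist_eq_norm]
  refine (h k).trans (mul_le_mul_of_nonneg_left (pow_le_pow_of_le_one hr0 hr1.le ?_) hB)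
  exact (he k).trans (Nat.lt_pow_self hq).le

variable {C : Type*} [NormedField C] [IsUltrametricDist C] [CompleteSpace C] {π : C} {q : ℕ}

lemma exists_forall_ghmBound_le {a r : ℝ} (ha : 0 < a) (hr0 : 0 ≤ r) (hr1 : r < 1) (hq : 1 < q) :
    ∃ B, ∀ i, ghmBound a r q i ≤ B := by
  obtain ⟨n, hn⟩ := exists_pow_lt_of_lt_one ha hr1
  refine ⟨ghmBound a r q n, ghmBound_le_of_forall_pow_le ha fun k hk => ?_⟩
  refine (pow_le_pow_of_le_one hr0 hr1.le ?_).trans hn.le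
  have := Nat.lt_pow_self hq (n := k)
  omega

lemma tendsto_ghphi0 (hπ : 0 < ‖π‖) (hq : 1 < q) {u : C} (hu : ‖u‖ < 1) :
    Tendsto (fun k => π ^ k * ghm π q (2 * k) u) atTop (nhds (ghphi0 π q u)) := by
  obtain ⟨B, hB⟩ := exists_forall_ghmBound_le hπ (norm_nonneg u) hu hq
  refine (cauchySeq_of_norm_succ_sub_le (B := √(B / ‖π‖)) (Real.sqrt_nonneg _) (norm_nonneg u) hu
    hq (e := fun k => 2 * k + 1) (fun k => by omega) fun k => ?_).tendsto_limUnder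
  rw [ghm_even_succ_sub (norm_pos_iff.1 hπ), norm_mul, norm_pow]
  gcongr
  refine Real.le_sqrt_of_sq_le ((norm_sq_pow_mul_ghm_odd_le hπ le_rfl k).trans ?_)
  gcongr
  exact hB _

lemma tendsto_ghphi1 (hπ : 0 < ‖π‖) (hq : 1 < q) {u : C} (hu : ‖u‖ < 1) :
    Tendsto (fun k => π ^ (k + 1) * ghm π q (2 * k + 1) u) atTop (nhds (ghphi1 π q u)) := by
  obtain ⟨B, hB⟩ := exists_forall_ghmBound_le hπ (norm_nonneg u) hu hq
  refine (cauchySeq_of_norm_succ_sub_le (B := √B) (Real.sqrt_nonneg _) (norm_nonneg u) hu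
    hq (e := fun k => 2 * (k + 1)) (fun k => by omega) fun k => ?_).tendsto_limUnder
  rw [ghm_odd_succ_sub (norm_pos_iff.1 hπ), norm_mul, norm_pow]
  gcongr
  exact Real.le_sqrt_of_sq_le ((norm_sq_pow_mul_ghm_even_le hπ le_rfl (k + 1)).trans (hB _))

lemma tendsto_ghmDet (hπ : 0 < ‖π‖) (hq : 1 < q) {u v : C} (hu : ‖u‖ < 1) (hv : ‖v‖ < 1) :
    Tendsto (fun k => ghmDet π q (2 * k) u v) atTop
      (nhds (ghphi1 π q u * ghphi0 π q v - ghphi0 π q u * ghphi1 π q v)) := by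
  refine (((tendsto_ghphi1 hπ hq hu).mul (tendsto_ghphi0 hπ hq hv)).sub
    ((tendsto_ghphi0 hπ hq hu).mul (tendsto_ghphi1 hπ hq hv))).congr fun k => ?_
  rw [ghmDet, pow_mul (-1 : C)]
  ring

lemma norm_ghphi_det_sub_le {p n : ℕ} (hp : p.Prime) (hn : n ≠ 0) (hq : q = p ^ n)
    (hπ : 0 < ‖π‖) {r : ℝ} (hr : r < 1) {u v : C} (hu : ‖u‖ ≤ r) (hv : ‖v‖ ≤ r)
    (hθ : max ‖(p : C)‖ (‖u - v‖ ^ (q - 1)) * max 1 (r ^ 2 / ‖π‖) ≤ 1) :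
    ‖ghphi1 π q u * ghphi0 π q v - ghphi0 π q u * ghphi1 π q v - (u - v)‖ ≤
      max ‖(p : C)‖ (‖u - v‖ ^ (q - 1)) * max 1 (r ^ 2 / ‖π‖) * ‖u - v‖ := by
  set κ := max ‖(p : C)‖ (‖u - v‖ ^ (q - 1))
  have hπ0 : π ≠ 0 := norm_pos_iff.1 hπ
  have hκ0 : 0 ≤ κ := le_max_of_le_left (norm_nonneg _)
  have hr0 : 0 ≤ r := (norm_nonneg u).trans hu
  have hq1 : 1 < q := hq ▸ Nat.one_lt_pow hn hp.one_lt
  have hstep (k : ℕ) : ‖ghmDet π q (k + 1) u v - ghmDet π q k u v‖ ≤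
      κ * max 1 (r ^ 2 / ‖π‖) * ‖u - v‖ := by
    rw [ghmDet_succ_sub hπ0, norm_mul, norm_pow, norm_neg, norm_one, one_pow, one_mul, norm_mul]
    calc _ ≤ ghmBound ‖π‖ r q (k + 1) * (κ ^ (k + 1) * ‖u - v‖) :=
          mul_le_mul (norm_ghm_mul_ghm_le hπ hu hv _)
            (norm_pow_pow_sub_le hp hq (hu.trans hr.le) (hv.trans hr.le) _) (norm_nonneg _)
            (ghmBound_pos _).le
      _ = ghmBound ‖π‖ r q (k + 1) * κ ^ (k + 1) * ‖u - v‖ := (mul_assoc _ _ _).symm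
      _ ≤ κ * max 1 (r ^ 2 / ‖π‖) * ‖u - v‖ :=
          mul_le_mul_of_nonneg_right
            (ghmBound_succ_mul_pow_le hπ hr0 hr.le (by omega) hκ0 hθ k) (norm_nonneg _)
  refine le_of_tendsto' ((tendsto_ghmDet hπ hq1 (hu.trans_lt hr) (hv.trans_lt hr)).sub_const
    (u - v)).norm fun k => ?_
  have htelescope := norm_sub_le_of_forall_norm_succ_sub_le (x := fun k => ghmDet π q k u v)
    (Nat.zero_le (2 * k)) (by positivity) fun k _ _ => hstep k
  simpa only [ghmDet_zero hπ0] using htelescope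

end PeriodMap

section Circle

/-! The equation `‖u‖ ^ (q ^ s * (q + 1)) = ‖π‖` encodes `|u| = γ`. -/

variable {C : Type*} [NormedField C] {π u v : C} {q s j : ℕ}

lemma ne_zero_of_norm_pow_eq (hπ0 : 0 < ‖π‖) (hq : 1 < q)
    (hu : ‖u‖ ^ (q ^ s * (q + 1)) = ‖π‖) : u ≠ 0 := by
  rintro rfl
  rw [norm_zero, zero_pow (by positivity)] at hu
  exact hπ0.ne hu

lemma norm_lt_one_of_norm_pow_eq (hπ1 : ‖π‖ < 1) (hu : ‖u‖ ^ (q ^ s * (q + 1)) = ‖π‖) :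
    ‖u‖ < 1 :=
  lt_of_pow_lt_pow_left₀ _ zero_le_one (by rwa [one_pow, hu])

lemma ghmBound_eq_of_norm_pow_eq (hπ0 : 0 < ‖π‖) (hπ1 : ‖π‖ < 1) (hq : 1 < q)
    (hu : ‖u‖ ^ (q ^ s * (q + 1)) = ‖π‖) {i : ℕ} (hi : i ≤ s + 1) :
    ghmBound ‖π‖ ‖u‖ q i = ‖π‖ ^ i * ‖ghmLead π q i u‖ ^ 2 := by
  refine ghmBound_eq_norm_ghmLead_sq hπ0 fun k hk => ?_
  rw [← hu]
  refine pow_le_pow_of_le_one (norm_nonneg u) (norm_lt_one_of_norm_pow_eq hπ1 hu).le ?_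
  have hks : q ^ k ≤ q ^ s := Nat.pow_le_pow_right hq.le (by omega)
  linarith [Nat.mul_le_mul_left (q ^ s) (show 2 ≤ q + 1 by omega)]

lemma ghmBound_le_of_norm_pow_eq (hπ0 : 0 < ‖π‖) (hπ1 : ‖π‖ < 1) (hq : 1 < q)
    (hu : ‖u‖ ^ (q ^ s * (q + 1)) = ‖π‖) (i : ℕ) :
    ghmBound ‖π‖ ‖u‖ q i ≤ ‖π‖ ^ (s + 1) * ‖ghmLead π q (s + 1) u‖ ^ 2 := by
  rw [← ghmBound_eq_of_norm_pow_eq hπ0 hπ1 hq hu le_rfl]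
  refine ghmBound_le_of_forall_pow_le hπ0 (fun k hk => ?_) i
  rw [← hu]
  refine pow_le_pow_of_le_one (norm_nonneg u) (norm_lt_one_of_norm_pow_eq hπ1 hu).le ?_
  have hsk : q ^ (s + 1) ≤ q ^ k := Nat.pow_le_pow_right hq.le hk
  have hs : q ^ s ≤ q ^ (s + 1) := Nat.pow_le_pow_right hq.le s.le_succ
  rw [mul_add_one, ← pow_succ]
  omega

variable [IsUltrametricDist C]

lemma norm_ghm_le_norm_ghmLead (hπ0 : 0 < ‖π‖) (hπ1 : ‖π‖ < 1) (hq : 1 < q)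
    (hu : ‖u‖ ^ (q ^ s * (q + 1)) = ‖π‖) {i : ℕ} (hi : i ≤ s + 1) :
    ‖ghm π q i u‖ ≤ ‖ghmLead π q i u‖ := by
  have h := norm_sq_ghm_le (q := q) hπ0 (le_refl ‖u‖) i
  rw [ghmBound_eq_of_norm_pow_eq hπ0 hπ1 hq hu hi] at h
  exact le_of_sq_le_sq (le_of_mul_le_mul_left h (pow_pos hπ0 i)) (norm_nonneg _)

lemma norm_ghm_div_ghmLead_sub_one_le (hπ0 : 0 < ‖π‖) (hπ1 : ‖π‖ < 1) (hq : 1 < q)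
    (hu : ‖u‖ ^ (q ^ s * (q + 1)) = ‖π‖) {i : ℕ} (hi : i ≤ s + 1) :
    ‖ghm π q i u / ghmLead π q i u - 1‖ ≤ ‖u‖ ^ q ^ s := by
  have hπ : π ≠ 0 := norm_pos_iff.1 hπ0
  have hu0 := ne_zero_of_norm_pow_eq hπ0 hq hu
  have hstep (k : ℕ) (hk : k < i) : ‖ghm π q (k + 1) u / ghmLead π q (k + 1) u -
      ghm π q k u / ghmLead π q k u‖ ≤ ‖u‖ ^ q ^ s := by
    cases k with
    | zero => simp [ghm, ghmLead, hπ, hu0]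
    | succ k =>
      have hexp : q ^ s + (q ^ k + q ^ (k + 1)) ≤ q ^ s * (q + 1) := by
        have h1 : q ^ k ≤ q ^ s := Nat.pow_le_pow_right hq.le (by omega)
        have h2 : q ^ (k + 1) ≤ q ^ s := Nat.pow_le_pow_right hq.le (by omega)
        linarith [Nat.mul_le_mul_left (q ^ s) (show 2 ≤ q from hq)]
      have hratio : ‖ghm π q k u‖ / ‖ghmLead π q k u‖ ≤ 1 :=
        div_le_one_of_le₀ (norm_ghm_le_norm_ghmLead hπ0 hπ1 hq hu (by omega)) (norm_nonneg _)
      rw [ghm_div_ghmLead_succ_sub hπ hu0, norm_mul, norm_div, norm_div, norm_pow]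
      refine (mul_le_of_le_one_left (by positivity) hratio).trans ?_
      rw [div_le_iff₀ (by positivity), ← pow_add, ← hu]
      exact pow_le_pow_of_le_one (norm_nonneg u) (norm_lt_one_of_norm_pow_eq hπ1 hu).le hexp
  have htelescope := norm_sub_le_of_forall_norm_succ_sub_le
    (x := fun k => ghm π q k u / ghmLead π q k u) (Nat.zero_le i) (by positivity)
    fun k _ hk => hstep k hk
  simpa [ghm, ghmLead] using htelescope

lemma norm_pow_mul_ghm_even_mul_pow_le (hπ0 : 0 < ‖π‖) (hπ1 : ‖π‖ < 1) (hq : 1 < q)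
    (hu : ‖u‖ ^ (q ^ (2 * j) * (q + 1)) = ‖π‖) {k : ℕ} (hk : j < k) :
    ‖π ^ k * ghm π q (2 * k) u * u ^ q ^ (2 * k)‖ ≤
      ‖u‖ ^ q ^ (2 * j) * ‖π ^ (j + 1) * ghmLead π q (2 * j + 1) u‖ := by
  have hcoeff : ‖π ^ k * ghm π q (2 * k) u‖ ^ 2 ≤
      ‖π‖ ^ (2 * j + 1) * ‖ghmLead π q (2 * j + 1) u‖ ^ 2 :=
    (norm_sq_pow_mul_ghm_even_le hπ0 le_rfl k).trans
      (ghmBound_le_of_norm_pow_eq hπ0 hπ1 hq hu (2 * k))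
  have hexp : q ^ (2 * j) * (q + 1) + 2 * q ^ (2 * j) ≤ 2 * q ^ (2 * k) := by
    have h : q ^ (2 * j) * q ^ 2 ≤ q ^ (2 * k) := by
      rw [← pow_add]
      exact Nat.pow_le_pow_right hq.le (by omega)
    nlinarith [Nat.mul_le_mul_left (q ^ (2 * j)) (show q + 3 ≤ 2 * q ^ 2 by nlinarith)]
  have hpow : ‖u‖ ^ (2 * q ^ (2 * k)) ≤ ‖π‖ * ‖u‖ ^ (2 * q ^ (2 * j)) := by
    nth_rw 1 [← hu]
    rw [← pow_add]
    exact pow_le_pow_of_le_one (norm_nonneg u) (norm_lt_one_of_norm_pow_eq hπ1 hu).le hexp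
  refine le_of_sq_le_sq ?_ (by positivity)
  rw [norm_mul, norm_pow u]
  calc (‖π ^ k * ghm π q (2 * k) u‖ * ‖u‖ ^ q ^ (2 * k)) ^ 2
      = ‖π ^ k * ghm π q (2 * k) u‖ ^ 2 * ‖u‖ ^ (2 * q ^ (2 * k)) := by ring
    _ ≤ ‖π‖ ^ (2 * j + 1) * ‖ghmLead π q (2 * j + 1) u‖ ^ 2 *
          (‖π‖ * ‖u‖ ^ (2 * q ^ (2 * j))) := by gcongr
    _ = (‖u‖ ^ q ^ (2 * j) * ‖π ^ (j + 1) * ghmLead π q (2 * j + 1) u‖) ^ 2 := by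
        rw [norm_mul, norm_pow]
        ring

variable [CompleteSpace C]

lemma norm_ghphi1_div_ghmLead_sub_one_le (hπ0 : 0 < ‖π‖) (hπ1 : ‖π‖ < 1) (hq : 1 < q)
    (hu : ‖u‖ ^ (q ^ (2 * j) * (q + 1)) = ‖π‖) :
    ‖ghphi1 π q u / (π ^ (j + 1) * ghmLead π q (2 * j + 1) u) - 1‖ ≤ ‖u‖ ^ q ^ (2 * j) := by
  have hπ : π ≠ 0 := norm_pos_iff.1 hπ0
  set L := π ^ (j + 1) * ghmLead π q (2 * j + 1) u
  have hL : 0 < ‖L‖ := norm_pos_iff.2 (mul_ne_zero (pow_ne_zero _ hπ)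
    (ghmLead_ne_zero hπ (ne_zero_of_norm_pow_eq hπ0 hq hu) _))
  set y : ℕ → C := fun k => π ^ (k + 1) * ghm π q (2 * k + 1) u / L with hy
  have hstep (k : ℕ) (hk : j ≤ k) : ‖y (k + 1) - y k‖ ≤ ‖u‖ ^ q ^ (2 * j) := by
    rw [hy, ← sub_div, ghm_odd_succ_sub hπ, norm_div, div_le_iff₀ hL]
    exact norm_pow_mul_ghm_even_mul_pow_le hπ0 hπ1 hq hu (Nat.lt_succ_of_le hk)
  have hbase : ‖y j - 1‖ ≤ ‖u‖ ^ q ^ (2 * j) := by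
    simp only [hy, L, mul_div_mul_left _ _ (pow_ne_zero (j + 1) hπ)]
    exact norm_ghm_div_ghmLead_sub_one_le hπ0 hπ1 hq hu le_rfl
  refine le_of_tendsto (((tendsto_ghphi1 hπ0 hq (norm_lt_one_of_norm_pow_eq hπ1 hu)).div_const
    L).sub_const 1).norm (eventually_atTop.2 ⟨j, fun k hk => ?_⟩)
  rw [← sub_add_sub_cancel _ (y j) 1]
  exact (IsUltrametricDist.norm_add_le_max _ _).trans (max_le
    (norm_sub_le_of_forall_norm_succ_sub_le hk (by positivity) fun k hk _ => hstep k hk) hbase)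

lemma norm_ghphi1_eq (hπ0 : 0 < ‖π‖) (hπ1 : ‖π‖ < 1) (hq : 1 < q)
    (hu : ‖u‖ ^ (q ^ (2 * j) * (q + 1)) = ‖π‖) :
    ‖ghphi1 π q u‖ = ‖π ^ (j + 1) * ghmLead π q (2 * j + 1) u‖ := by
  refine norm_eq_norm_of_norm_div_sub_one_lt
    ((norm_ghphi1_div_ghmLead_sub_one_le hπ0 hπ1 hq hu).trans_lt ?_)
  exact pow_lt_one₀ (norm_nonneg u) (norm_lt_one_of_norm_pow_eq hπ1 hu) (by positivity)

lemma ghphi1_ne_zero (hπ0 : 0 < ‖π‖) (hπ1 : ‖π‖ < 1) (hq : 1 < q)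
    (hu : ‖u‖ ^ (q ^ (2 * j) * (q + 1)) = ‖π‖) : ghphi1 π q u ≠ 0 := by
  have hπ : π ≠ 0 := norm_pos_iff.1 hπ0
  rw [← norm_ne_zero_iff, norm_ghphi1_eq hπ0 hπ1 hq hu, norm_ne_zero_iff]
  exact mul_ne_zero (pow_ne_zero _ hπ)
    (ghmLead_ne_zero hπ (ne_zero_of_norm_pow_eq hπ0 hq hu) _)

lemma norm_ghphi1_div_ghphi1_sub_one_le (hπ0 : 0 < ‖π‖) (hπ1 : ‖π‖ < 1) (hq : 1 < q)
    (hv : ‖v‖ ^ (q ^ (2 * j) * (q + 1)) = ‖π‖) {θ : ℝ} (hθ : θ < 1)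
    (hvθ : ‖v‖ ^ q ^ (2 * j) ≤ θ) (huv : ‖u / v - 1‖ ≤ θ) :
    ‖ghphi1 π q u / ghphi1 π q v - 1‖ ≤ θ := by
  have hπ : π ≠ 0 := norm_pos_iff.1 hπ0
  have huv' : ‖u‖ = ‖v‖ := norm_eq_norm_of_norm_div_sub_one_lt (huv.trans_lt hθ)
  have hu : ‖u‖ ^ (q ^ (2 * j) * (q + 1)) = ‖π‖ := huv' ▸ hv
  have hLu := ghmLead_ne_zero (q := q) hπ (ne_zero_of_norm_pow_eq hπ0 hq hu) (2 * j + 1)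
  have hLv := ghmLead_ne_zero (q := q) hπ (ne_zero_of_norm_pow_eq hπ0 hq hv) (2 * j + 1)
  have hφv := ghphi1_ne_zero hπ0 hπ1 hq hv
  have hsplit : ghphi1 π q u / ghphi1 π q v =
      ghphi1 π q u / (π ^ (j + 1) * ghmLead π q (2 * j + 1) u) *
        (ghphi1 π q v / (π ^ (j + 1) * ghmLead π q (2 * j + 1) v))⁻¹ *
          (u / v) ^ (∑ k ∈ Finset.range (2 * j + 1), q ^ k) := by
    rw [← ghmLead_div_ghmLead hπ]
    field_simp
  rw [hsplit]
  refine norm_mul_sub_one_le hθ.le (norm_mul_sub_one_le hθ.le ?_ ?_)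
    (norm_pow_sub_one_le hθ.le huv _)
  · exact (norm_ghphi1_div_ghmLead_sub_one_le hπ0 hπ1 hq hu).trans (huv' ▸ hvθ)
  · exact norm_inv_sub_one_le hθ ((norm_ghphi1_div_ghmLead_sub_one_le hπ0 hπ1 hq hv).trans hvθ)

end Circle

section Bijection

open Metric

variable {C : Type*} [NormedField C] [IsUltrametricDist C] [CompleteSpace C] {π u₀ : C}
  {p n q j : ℕ}

lemma norm_neg_sq_mul_ghphi_div_sub_le (hp : p.Prime) (hn : n ≠ 0) (hq : q = p ^ n)
    (hπ0 : 0 < ‖π‖) (hπ1 : ‖π‖ < 1) (hu₀ : ‖u₀‖ ^ (q ^ (2 * j) * (q + 1)) = ‖π‖)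
    {θ : ℝ} (hθ : θ < 1) (hu₀θ : ‖u₀‖ ^ q ^ (2 * j) ≤ θ) {u v : C} (hu : ‖u / u₀ - 1‖ ≤ θ)
    (hv : ‖v / u₀ - 1‖ ≤ θ)
    (huv : max ‖(p : C)‖ (‖u - v‖ ^ (q - 1)) * max 1 (‖u₀‖ ^ 2 / ‖π‖) ≤ θ) :
    ‖-ghphi1 π q u₀ ^ 2 * (ghphi0 π q u / ghphi1 π q u) - u -
      (-ghphi1 π q u₀ ^ 2 * (ghphi0 π q v / ghphi1 π q v) - v)‖ ≤ θ * ‖u - v‖ := by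
  have hq1 : 1 < q := hq ▸ Nat.one_lt_pow hn hp.one_lt
  have hφ₀ := ghphi1_ne_zero hπ0 hπ1 hq1 hu₀
  have hcircle {w : C} (hw : ‖w / u₀ - 1‖ ≤ θ) : ‖w‖ = ‖u₀‖ :=
    norm_eq_norm_of_norm_div_sub_one_lt (hw.trans_lt hθ)
  have hφ {w : C} (hw : ‖w / u₀ - 1‖ ≤ θ) : ghphi1 π q w ≠ 0 :=
    ghphi1_ne_zero hπ0 hπ1 hq1 (hcircle hw ▸ hu₀)
  have hφu := hφ hu
  have hφv := hφ hv
  rcases eq_or_ne u v with rfl | hne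
  · simp
  have hne' : u - v ≠ 0 := sub_ne_zero.2 hne
  set D := ghphi1 π q u * ghphi0 π q v - ghphi0 π q u * ghphi1 π q v with hD
  have hdet : ‖D / (u - v) - 1‖ ≤ θ := by
    rw [div_sub_one hne', norm_div, div_le_iff₀ (norm_pos_iff.2 hne')]
    exact (norm_ghphi_det_sub_le hp hn hq hπ0 (norm_lt_one_of_norm_pow_eq hπ1 hu₀) (hcircle hu).le
      (hcircle hv).le (huv.trans hθ.le)).trans (mul_le_mul_of_nonneg_right huv (norm_nonneg _))
  have hinv {w : C} (hw : ‖w / u₀ - 1‖ ≤ θ) : ‖(ghphi1 π q w / ghphi1 π q u₀)⁻¹ - 1‖ ≤ θ :=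
    norm_inv_sub_one_le hθ (norm_ghphi1_div_ghphi1_sub_one_le hπ0 hπ1 hq1 hu₀ hθ hu₀θ hw)
  have hsplit : -ghphi1 π q u₀ ^ 2 * (ghphi0 π q u / ghphi1 π q u) - u -
      (-ghphi1 π q u₀ ^ 2 * (ghphi0 π q v / ghphi1 π q v) - v) =
        (D / (u - v) * (ghphi1 π q u / ghphi1 π q u₀)⁻¹ * (ghphi1 π q v / ghphi1 π q u₀)⁻¹ - 1) *
          (u - v) := by
    field_simp [hφ₀]
    rw [hD]
    ring
  rw [hsplit, norm_mul]
  exact mul_le_mul_of_nonneg_right (norm_mul_sub_one_le hθ.le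
    (norm_mul_sub_one_le hθ.le hdet (hinv hu)) (hinv hv)) (norm_nonneg _)

lemma max_mul_max_one_div_lt_one {a b c x : ℝ} (hb0 : 0 < b) (hb1 : b < 1) (hab : a ≤ b)
    (hc : c < 1) (hx0 : 0 ≤ x) (hx1 : x < 1) (hxc : x * c < b) :
    max a x * max 1 (c / b) < 1 := by
  rw [max_mul_of_nonneg _ _ (le_max_of_le_left zero_le_one)]
  refine max_lt ?_ ?_
  · calc a * max 1 (c / b) ≤ b * max 1 (c / b) := by gcongr
      _ = max b c := by rw [mul_max_of_nonneg _ _ hb0.le, mul_one, mul_div_cancel₀ _ hb0.ne']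
      _ < 1 := max_lt hb1 hc
  · rw [mul_max_of_nonneg _ _ hx0, mul_one, ← mul_div_assoc]
    exact max_lt hx1 ((div_lt_one hb0).2 hxc)

theorem bijOn_ghphi_div_ball (hp : p.Prime) (hn : n ≠ 0) (hq : q = p ^ n) (hpπ : ‖(p : C)‖ ≤ ‖π‖)
    (hπ0 : 0 < ‖π‖) (hπ1 : ‖π‖ < 1) (hu₀ : ‖u₀‖ ^ (q ^ (2 * j) * (q + 1)) = ‖π‖) {R : ℝ}
    (hR : R ≤ ‖u₀‖) (hRπ : R ^ (q - 1) * ‖u₀‖ ^ 2 ≤ ‖π‖) :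
    Set.BijOn (fun u => ghphi0 π q u / ghphi1 π q u) (ball u₀ R)
      (ball (ghphi0 π q u₀ / ghphi1 π q u₀) (R / ‖ghphi1 π q u₀‖ ^ 2)) := by
  have hq1 : 1 < q := hq ▸ Nat.one_lt_pow hn hp.one_lt
  have hu₀0 := ne_zero_of_norm_pow_eq hπ0 hq1 hu₀
  have hu₀1 := norm_lt_one_of_norm_pow_eq hπ1 hu₀
  have hφ₀ := ghphi1_ne_zero hπ0 hπ1 hq1 hu₀
  have hbij := bijOn_ball_of_forall_lipschitzOnWith_inv_mul_sub (R := R) (u₀ := u₀)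
    (f := fun u => ghphi0 π q u / ghphi1 π q u) (c := (-ghphi1 π q u₀ ^ 2)⁻¹)
    (inv_ne_zero (neg_ne_zero.2 (pow_ne_zero 2 hφ₀))) fun ρ hρ0 hρR => ?_
  · rwa [norm_inv, norm_neg, norm_pow, inv_mul_eq_div] at hbij
  set θ := max (max ‖(p : C)‖ (ρ ^ (q - 1)) * max 1 (‖u₀‖ ^ 2 / ‖π‖))
    (max (‖u₀‖ ^ q ^ (2 * j)) (ρ / ‖u₀‖))
  have hθ0 : 0 ≤ θ := by positivity
  have hθ1 : θ < 1 := by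
    have hρ : ρ ^ (q - 1) < R ^ (q - 1) := pow_lt_pow_left₀ hρR hρ0 (by omega)
    refine max_lt (max_mul_max_one_div_lt_one hπ0 hπ1 hpπ
      (pow_lt_one₀ (norm_nonneg _) hu₀1 two_ne_zero) (by positivity)
      (pow_lt_one₀ hρ0 (hρR.trans (hR.trans_lt hu₀1)) (by omega)) ?_) (max_lt ?_ ?_)
    · exact (mul_lt_mul_of_pos_right hρ (by positivity)).trans_le hRπ
    · exact pow_lt_one₀ (norm_nonneg _) hu₀1 (by positivity)
    · exact (div_lt_one (norm_pos_iff.2 hu₀0)).2 (hρR.trans_le hR)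
  have hball {w : C} (hw : w ∈ closedBall u₀ ρ) : ‖w / u₀ - 1‖ ≤ θ := by
    rw [div_sub_one hu₀0, norm_div]
    refine le_trans ?_ ((le_max_right _ _).trans (le_max_right _ _))
    exact div_le_div_of_nonneg_right (mem_closedBall_iff_norm.1 hw) (norm_nonneg _)
  refine ⟨⟨θ, hθ0⟩, hθ1, LipschitzOnWith.of_dist_le_mul fun u hu v hv => ?_⟩
  rw [dist_eq_norm, dist_eq_norm, inv_inv]
  refine norm_neg_sq_mul_ghphi_div_sub_le hp hn hq hπ0 hπ1 hu₀ hθ1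
    ((le_max_left _ _).trans (le_max_right _ _)) (hball hu) (hball hv) ?_
  have huv : ‖u - v‖ ≤ ρ := by
    rw [← dist_eq_norm]
    exact (dist_triangle_max u u₀ v).trans (max_le hu (mem_closedBall'.1 hv))
  refine le_trans ?_ (le_max_left _ _)
  gcongr

end Bijection

section Radius

variable {a γ R : ℝ} {q s : ℕ}

lemma pow_eq_of_eq_rpow_one_div (ha : 0 ≤ a) (hq : q ≠ 0)
    (hγ : γ = a ^ ((1 : ℝ) / ((q : ℝ) ^ (s + 1) + (q : ℝ) ^ s))) :
    γ ^ (q ^ s * (q + 1)) = a := by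
  have hcast : (q : ℝ) ^ (s + 1) + (q : ℝ) ^ s = ((q ^ s * (q + 1) : ℕ) : ℝ) := by
    push_cast
    ring
  rw [hγ, hcast, one_div]
  exact Real.rpow_inv_natCast_pow ha (by positivity)

lemma rpow_one_div_pow_mul_sq (ha : 0 ≤ a) (hγ : 0 < γ) (hq : 1 < q) :
    ((a * γ ^ (-(2 : ℝ))) ^ ((1 : ℝ) / ((q : ℝ) - 1))) ^ (q - 1) * γ ^ 2 = a := by
  rw [one_div, ← Nat.cast_pred (by omega), Real.rpow_inv_natCast_pow (by positivity) (by omega),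
    Real.rpow_neg hγ.le, Real.rpow_two, inv_mul_cancel_right₀ (by positivity)]

lemma le_of_pow_mul_sq_eq (hγ0 : 0 < γ) (hγ1 : γ ≤ 1) (hq : 1 < q)
    (hR : R ^ (q - 1) * γ ^ 2 = γ ^ (q ^ s * (q + 1))) : R ≤ γ := by
  refine le_of_pow_le_pow_left₀ (n := q - 1) (by omega) hγ0.le ?_
  refine le_of_mul_le_mul_right ?_ (pow_pos hγ0 2)
  rw [hR, ← pow_add]
  refine pow_le_pow_of_le_one hγ0.le hγ1 ?_
  have := Nat.le_mul_of_pos_left (q + 1) (pow_pos (zero_lt_one.trans hq) s)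
  omega

lemma mul_pow_eq_pow_two_mul_geomSum (hγ : 0 < γ) (hq : 1 < q) (hR0 : 0 ≤ R)
    (hR : R ^ (q - 1) * γ ^ 2 = γ ^ (q ^ s * (q + 1))) :
    R * γ ^ q ^ s = γ ^ (2 * ∑ k ∈ Finset.range (s + 1), q ^ k) := by
  have hgeom : (∑ k ∈ Finset.range (s + 1), q ^ k) * (q - 1) + 1 = q ^ s * q := by
    have h := geom_sum_mul_add (q - 1) (s + 1)
    rwa [Nat.sub_add_cancel hq.le, pow_succ] at h
  refine (pow_left_inj₀ (by positivity) (by positivity) (n := q - 1) (by omega)).1 ?_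
  refine mul_right_cancel₀ (pow_pos hγ 2).ne' ?_
  calc (R * γ ^ q ^ s) ^ (q - 1) * γ ^ 2
      = R ^ (q - 1) * γ ^ 2 * γ ^ (q ^ s * (q - 1)) := by ring
    _ = γ ^ (2 * ((∑ k ∈ Finset.range (s + 1), q ^ k) * (q - 1) + 1)) := by
        rw [hR, ← pow_add, hgeom]
        congr 1
        obtain ⟨m, rfl⟩ : ∃ m, q = m + 1 := ⟨q - 1, by omega⟩
        rw [Nat.add_sub_cancel]
        ring
    _ = (γ ^ (2 * ∑ k ∈ Finset.range (s + 1), q ^ k)) ^ (q - 1) * γ ^ 2 := by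
        rw [← pow_mul, ← pow_add]
        ring

lemma rpow_sub_one_div_eq (hγ : 0 ≤ γ) (ha : 0 < a) (hγa : γ ^ (q ^ s * (q + 1)) = a) :
    a ^ ((s : ℝ) - 1 / ((q : ℝ) + 1)) = a ^ s / γ ^ q ^ s := by
  have hroot : a ^ (1 / ((q : ℝ) + 1)) = γ ^ q ^ s := by
    rw [← hγa, pow_mul, one_div, ← Nat.cast_succ]
    exact Real.pow_rpow_inv_natCast (by positivity) (by omega)
  rw [Real.rpow_sub ha, Real.rpow_natCast, hroot]

end Radius

section Main

variable {C : Type*} [NormedField C]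

lemma norm_natCast_prime_le_of_forall_norm_le {p : ℕ} [Fact p.Prime] [Algebra ℚ_[p] C]
    (hiso : ∀ x : ℚ_[p], ‖algebraMap ℚ_[p] C x‖ = ‖x‖) {K : IntermediateField ℚ_[p] C} {π : C}
    (hπ : ∀ x ∈ K, ‖x‖ < 1 → ‖x‖ ≤ ‖π‖) : ‖(p : C)‖ ≤ ‖π‖ := by
  refine hπ _ (natCast_mem K p) ?_
  rw [← map_natCast (algebraMap ℚ_[p] C), hiso]
  exact Padic.norm_p_lt_one

variable [IsUltrametricDist C] [CompleteSpace C]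

lemma div_norm_ghphi1_sq {π u : C} {q j : ℕ} (hπ0 : 0 < ‖π‖) (hπ1 : ‖π‖ < 1) (hq : 1 < q)
    (hu : ‖u‖ ^ (q ^ (2 * j) * (q + 1)) = ‖π‖) {R : ℝ} (hR0 : 0 ≤ R)
    (hR : R ^ (q - 1) * ‖u‖ ^ 2 = ‖π‖) :
    R / ‖ghphi1 π q u‖ ^ 2 = ‖π‖ ^ (2 * j) / ‖u‖ ^ q ^ (2 * j) := by
  have hu0 : 0 < ‖u‖ := norm_pos_iff.2 (ne_zero_of_norm_pow_eq hπ0 hq hu)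
  have hRu := mul_pow_eq_pow_two_mul_geomSum hu0 hq hR0 (hR.trans hu.symm)
  rw [norm_ghphi1_eq hπ0 hπ1 hq hu, ghmLead, norm_mul, norm_div, norm_pow, norm_pow, norm_pow,
    div_eq_div_iff (by positivity) (by positivity), hRu]
  field_simp
  ring

theorem period_map_image_bijection_even_general {p : ℕ} (hp : p.Prime) (q : ℕ)
    (hq : ∃ r : ℕ, 0 < r ∧ q = p ^ r) (π : C) (hpπ : ‖(p : C)‖ ≤ ‖π‖) (hπ0 : 0 < ‖π‖)
    (hπ1 : ‖π‖ < 1) (s : ℕ) (hs : Even s) (γ : ℝ)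
    (hγ : γ = ‖π‖ ^ ((1 : ℝ) / ((q : ℝ) ^ (s + 1) + (q : ℝ) ^ s))) (u0 : C) (hu0 : ‖u0‖ = γ) :
    (∀ u : C, ‖u - u0‖ < (‖π‖ * γ ^ (-(2 : ℝ))) ^ ((1 : ℝ) / ((q : ℝ) - 1)) →
      ghphi1 π q u ≠ 0) ∧
    Set.BijOn (fun u => ghphi0 π q u / ghphi1 π q u)
      {u : C | ‖u - u0‖ < (‖π‖ * γ ^ (-(2 : ℝ))) ^ ((1 : ℝ) / ((q : ℝ) - 1))}
      {z : C | ‖z - ghphi0 π q u0 / ghphi1 π q u0‖ < ‖π‖ ^ ((s : ℝ) - 1 / ((q : ℝ) + 1))} := by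
  obtain ⟨r, hr, hqr⟩ := hq
  obtain ⟨j, rfl⟩ := hs.two_dvd
  have hq1 : 1 < q := hqr ▸ Nat.one_lt_pow hr.ne' hp.one_lt
  have hcircle := pow_eq_of_eq_rpow_one_div hπ0.le (by omega) hγ
  subst hu0
  have hu0 : 0 < ‖u0‖ := norm_pos_iff.2 (ne_zero_of_norm_pow_eq hπ0 hq1 hcircle)
  have hR0 : 0 ≤ (‖π‖ * ‖u0‖ ^ (-(2 : ℝ))) ^ ((1 : ℝ) / ((q : ℝ) - 1)) := by positivity
  have hRπ := rpow_one_div_pow_mul_sq hπ0.le hu0 hq1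
  rw [rpow_sub_one_div_eq hu0.le hπ0 hcircle]
  set R := (‖π‖ * ‖u0‖ ^ (-(2 : ℝ))) ^ ((1 : ℝ) / ((q : ℝ) - 1))
  have hR : R ≤ ‖u0‖ := le_of_pow_mul_sq_eq hu0 (norm_lt_one_of_norm_pow_eq hπ1 hcircle).le hq1
    (hRπ.trans hcircle.symm)
  have htarget := div_norm_ghphi1_sq hπ0 hπ1 hq1 hcircle hR0 hRπ
  have hbij := bijOn_ghphi_div_ball hp hr.ne' hqr hpπ hπ0 hπ1 hcircle hR hRπ.le
  rw [htarget] at hbij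
  refine ⟨fun u hu => ghphi1_ne_zero hπ0 hπ1 hq1 (j := j) ?_, ?_⟩
  · rwa [norm_eq_of_norm_sub_lt_right (hu.trans_le hR)]
  · simpa only [Metric.ball, dist_eq_norm] using hbij

end Main

theorem period_map_image_bijection_even {p : ℕ} [Fact p.Prime] {C : Type*} [NormedField C] [IsUltrametricDist C]
    [CompleteSpace C] [IsAlgClosed C] [Algebra ℚ_[p] C]
    (hiso : ∀ x : ℚ_[p], ‖algebraMap ℚ_[p] C x‖ = ‖x‖)
    (K : IntermediateField ℚ_[p] C) (hKfin : FiniteDimensional ℚ_[p] K)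
    (q : ℕ) (hq : ∃ r : ℕ, 0 < r ∧ q = p ^ r)
    (π : C) (hπK : π ∈ K) (hπ0 : 0 < ‖π‖) (hπ1 : ‖π‖ < 1)
    (hπunif : ∀ x ∈ K, ‖x‖ < 1 → ‖x‖ ≤ ‖π‖)
    (hres : ∃ S : Finset C, S.card = q ∧ (∀ s ∈ S, s ∈ K ∧ ‖s‖ ≤ 1) ∧
      (∀ x ∈ K, ‖x‖ ≤ 1 → ∃ s ∈ S, ‖x - s‖ < 1) ∧
      (∀ s ∈ S, ∀ t ∈ S, s ≠ t → ‖s - t‖ = 1))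
    (s : ℕ) (hs : Even s)
    (γ : ℝ) (hγ : γ = ‖π‖ ^ ((1:ℝ)/((q:ℝ)^(s+1) + (q:ℝ)^s)))
    (u0 : C) (hu0 : ‖u0‖ = γ) :
    (∀ u : C, ‖u - u0‖ < (‖π‖ * γ ^ (-(2:ℝ))) ^ ((1:ℝ)/((q:ℝ)-1)) → ghphi1 π q u ≠ 0) ∧
    Set.BijOn (fun u => ghphi0 π q u / ghphi1 π q u)
      {u : C | ‖u - u0‖ < (‖π‖ * γ ^ (-(2:ℝ))) ^ ((1:ℝ)/((q:ℝ)-1))}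
      {z : C | ‖z - ghphi0 π q u0 / ghphi1 π q u0‖ < ‖π‖ ^ ((s:ℝ) - 1/((q:ℝ)+1))} :=
  period_map_image_bijection_even_general Fact.out q hq π
    (norm_natCast_prime_le_of_forall_norm_le hiso hπunif) hπ0 hπ1 s hs γ hγ u0 hu0
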